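/- arXiv:1109.1836 — 3 statements merged into one kernel-verified Lean document; each statement's English description precedes it below -/
import Mathlib

section
/- Let n ≥ 1, 1 ≤ p₁ ≤ p₂ < ∞, 0 < s₁ ≤ s₂ < ∞, q ∈ [1,∞), and set σ = s₂ − s₁ + n/p₁ − n/p₂. If σ > 0, then for every Schwartz function f on ℝⁿ, lim_{t → 0⁺} t^{σ/2} ‖e^{tΔ}f‖_{B^{s₂}_{p₂,q}} = 0. -/
open MeasureTheory Real Filter
open scoped ENNReal FourierTransform

noncomputable section

/-- `ℝⁿ` as a Euclidean space. -/
abbrev Rn (n : ℕ) : Type := EuclideanSpace ℝ (Fin n)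

variable {n : ℕ}

/-- The Fourier transform of a real-valued Schwartz function, viewed as a ℂ-valued function. -/
def ftC (f : SchwartzMap (Rn n) ℝ) : Rn n → ℂ :=
  𝓕 (fun x => (f x : ℂ))

/-- `ψ₀` is a Littlewood–Paley function: an even, radial Schwartz function whose Fourier
transform is nonnegative, supported in the annulus `{ξ : 1/2 < ‖ξ‖ < 2}`, and satisfies
`∑_{j ∈ ℤ} ψ̂₀(2^{-j} ξ) = 1` for `ξ ≠ 0`. -/
structure IsLPF (n : ℕ) (ψ₀ : SchwartzMap (Rn n) ℝ) : Prop where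
  even : ∀ x : Rn n, ψ₀ (-x) = ψ₀ x
  radial : ∀ x y : Rn n, ‖x‖ = ‖y‖ → ψ₀ x = ψ₀ y
  ft_im : ∀ ξ : Rn n, (ftC ψ₀ ξ).im = 0
  ft_nonneg : ∀ ξ : Rn n, 0 ≤ (ftC ψ₀ ξ).re
  ft_supp : ∀ ξ : Rn n, ftC ψ₀ ξ ≠ 0 → 1/2 < ‖ξ‖ ∧ ‖ξ‖ < 2
  ft_sum : ∀ ξ : Rn n, ξ ≠ 0 → HasSum (fun j : ℤ => ftC ψ₀ ((2:ℝ) ^ (-j) • ξ)) 1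

/-- The Littlewood–Paley kernel `ψ_j(x) = 2^{jn} ψ₀(2^j x)`, whose Fourier transform is
`ψ̂₀(2^{-j} ξ)`. -/
def lpKernel (ψ₀ : SchwartzMap (Rn n) ℝ) (j : ℤ) (x : Rn n) : ℝ :=
  (2:ℝ) ^ (j * (n:ℤ)) * ψ₀ ((2:ℝ) ^ j • x)

/-- The Littlewood–Paley projection `Δ_j f = ψ_j ∗ f`. -/
def lpProj (ψ₀ : SchwartzMap (Rn n) ℝ) (j : ℤ) (f : Rn n → ℝ) : Rn n → ℝ :=
  MeasureTheory.convolution (lpKernel ψ₀ j) f (ContinuousLinearMap.mul ℝ ℝ) volume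

/-- `S_j f = ∑_{m ≤ j} Δ_m f`, the low-frequency cutoff; this is the L² function whose
Fourier transform is `(∑_{m ≤ j} ψ̂₀(2^{-m} ξ)) f̂(ξ)`. -/
def lowProj (ψ₀ : SchwartzMap (Rn n) ℝ) (j : ℤ) (f : Rn n → ℝ) (x : Rn n) : ℝ :=
  ∑' m : ℤ, if m ≤ j then lpProj ψ₀ m f x else 0

/-- `Ψ` is the low-frequency piece of the Littlewood–Paley decomposition:
`Ψ̂ = 1 − ∑_{k ≥ 0} ψ̂_k`. -/
def IsLowPiece (ψ₀ Ψ : SchwartzMap (Rn n) ℝ) : Prop :=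
  ∀ ξ : Rn n, ftC Ψ ξ = 1 - ∑' k : ℕ, ftC ψ₀ ((2:ℝ) ^ (-(k:ℤ)) • ξ)

/-- The inhomogeneous Besov norm `‖f‖_{B^s_{p,q}}`, valued in `[0,∞]`:
`‖Ψ∗f‖_{L^p} + (∑_{j ≥ 0} (2^{js} ‖Δ_j f‖_{L^p})^q)^{1/q}`, with the supremum over `j`
replacing the `ℓ^q` sum when `q = ∞`. -/
def besovNorm (ψ₀ Ψ : SchwartzMap (Rn n) ℝ) (s : ℝ) (p q : ℝ≥0∞) (f : Rn n → ℝ) : ℝ≥0∞ :=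
  eLpNorm (MeasureTheory.convolution (fun x => Ψ x) f (ContinuousLinearMap.mul ℝ ℝ) volume)
      p volume +
    (if q = ∞ then
      ⨆ j : ℕ, ENNReal.ofReal ((2:ℝ) ^ ((j:ℝ) * s)) * eLpNorm (lpProj ψ₀ (j:ℤ) f) p volume
    else
      (∑' j : ℕ, (ENNReal.ofReal ((2:ℝ) ^ ((j:ℝ) * s)) *
        eLpNorm (lpProj ψ₀ (j:ℤ) f) p volume) ^ q.toReal) ^ (1 / q.toReal))

/-- The heat semigroup `e^{tΔ} f = h_t ∗ f` with `h_t(x) = (4πt)^{-n/2} e^{-‖x‖²/(4t)}`. -/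
def heatOp (n : ℕ) (t : ℝ) (f : Rn n → ℝ) : Rn n → ℝ :=
  MeasureTheory.convolution
    (fun x : Rn n => (4 * π * t) ^ (-(n:ℝ)/2) * Real.exp (-‖x‖^2 / (4*t))) f
    (ContinuousLinearMap.mul ℝ ℝ) volume

/-- The partial derivative `∂_{x_i} f`. -/
def pderiv' (i : Fin n) (f : Rn n → ℝ) (x : Rn n) : ℝ :=
  fderiv ℝ f x (EuclideanSpace.single i 1)

/-- The Laplacian `Δf = ∑ᵢ ∂²_{x_i} f`. -/
def lapl (f : Rn n → ℝ) (x : Rn n) : ℝ :=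
  ∑ i : Fin n, pderiv' i (pderiv' i f) x

/-! For `0 < t ≤ 1` the norm `‖e^{tΔ}f‖_{B^s_{p,q}}` is bounded, so the factor `t^{σ/2}` alone
forces the limit.

Since `ψ̂₀` vanishes near the origin, `ψ̂₀ = |ξ|^{2N} φ̂` with `φ` Schwartz, and homogeneity moves
the factor `|ξ|^{2N}` onto `f̂`: `ψ_j ∗ f = 2^{-2Nj} φ_j ∗ (-Δ/4π²)^N f`. Convolution with an
`L¹`-normalised dilate `r^n k(r ·)`, `r ≥ 1`, of a rapidly decaying kernel preserves the decay
`(1 + |x|)^{-M}` uniformly in `r`. Applied to `φ_j` (`r = 2^j`) this bounds `ψ_j ∗ f` by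
`C 2^{-2Nj} (1 + |x|)^{-M}`; applied to `h_t` (`r = t^{-1/2}`) it shows that
`ψ_j ∗ e^{tΔ}f = e^{tΔ}(ψ_j ∗ f)` obeys such a bound uniformly in `0 < t ≤ 1`. Taking `M` so large
that `(1 + |x|)^{-M} ∈ L^p` and `2N ≥ s + 1` makes the sum over `j` geometric. -/

open scoped Convolution SchwartzMap Topology

open ContinuousLinearMap (mul)
open Module (finrank)

section PolynomialDecay

variable {V F : Type*} [NormedAddCommGroup V] [NormedAddCommGroup F]

/-- The polynomial weight `(1 + ‖x‖) ^ M` in which spatial decay is measured. -/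
def polyWeight (M : ℕ) (x : V) : ℝ :=
  (1 + ‖x‖) ^ M

/-- `g` decays polynomially of order `M` with constant `C`, i.e. `‖g x‖ ≤ C (1 + ‖x‖) ^ (-M)`,
written without division. -/
def PolyDecay (M : ℕ) (C : ℝ) (g : V → F) : Prop :=
  ∀ x, polyWeight M x * ‖g x‖ ≤ C

/-- The norm of `k` in the weighted space `L¹((1 + ‖x‖) ^ M dμ)`. -/
def weightedL1Norm [NormedSpace ℝ F] [MeasurableSpace V] (μ : Measure V) (M : ℕ) (k : V → F) : ℝ :=
  ∫ y, ‖polyWeight M y • k y‖ ∂μ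

lemma polyWeight_pos (M : ℕ) (x : V) : 0 < polyWeight M x := by
  unfold polyWeight
  positivity

lemma one_le_polyWeight (M : ℕ) (x : V) : 1 ≤ polyWeight M x :=
  one_le_pow₀ (le_add_of_nonneg_right (norm_nonneg x))

lemma norm_polyWeight (M : ℕ) (x : V) : ‖polyWeight M x‖ = polyWeight M x :=
  Real.norm_of_nonneg (polyWeight_pos M x).le

lemma continuous_polyWeight (M : ℕ) : Continuous (polyWeight M : V → ℝ) := by
  unfold polyWeight
  fun_prop

lemma polyWeight_add (M N : ℕ) (x : V) :
    polyWeight (M + N) x = polyWeight M x * polyWeight N x :=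
  pow_add _ _ _

lemma inv_polyWeight (M : ℕ) (x : V) : (polyWeight M x)⁻¹ = (1 + ‖x‖) ^ (-(M : ℝ)) := by
  rw [Real.rpow_neg (by positivity), Real.rpow_natCast, polyWeight]

lemma polyWeight_le_mul_sub (M : ℕ) (x y : V) :
    polyWeight M x ≤ polyWeight M y * polyWeight M (x - y) := by
  simp only [polyWeight, ← mul_pow]
  gcongr
  nlinarith [norm_le_norm_add_norm_sub' x y, mul_nonneg (norm_nonneg y) (norm_nonneg (x - y))]

namespace PolyDecay

variable {M : ℕ} {C : ℝ} {g : V → F}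

lemma nonneg (hg : PolyDecay M C g) : 0 ≤ C :=
  (mul_nonneg (polyWeight_pos M 0).le (norm_nonneg _)).trans (hg 0)

lemma norm_le (hg : PolyDecay M C g) (x : V) : ‖g x‖ ≤ C * (polyWeight M x)⁻¹ := by
  rw [← div_eq_mul_inv, le_div_iff₀' (polyWeight_pos M x)]
  exact hg x

lemma norm_le_const (hg : PolyDecay M C g) (x : V) : ‖g x‖ ≤ C :=
  (le_mul_of_one_le_left (norm_nonneg _) (one_le_polyWeight M x)).trans (hg x)

lemma const_smul {𝕜 : Type*} [NormedField 𝕜] [NormedSpace 𝕜 F] (hg : PolyDecay M C g) (c : 𝕜) :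
    PolyDecay M (‖c‖ * C) (c • g) := fun x => by
  rw [Pi.smul_apply, norm_smul, mul_left_comm]
  exact mul_le_mul_of_nonneg_left (hg x) (norm_nonneg c)

lemma eLpNorm_le [MeasurableSpace V] (hg : PolyDecay M C g) (p : ℝ≥0∞) (μ : Measure V) :
    eLpNorm g p μ ≤ ENNReal.ofReal C * eLpNorm (fun x : V => (1 + ‖x‖) ^ (-(M : ℝ))) p μ := by
  refine eLpNorm_le_mul_eLpNorm_of_ae_le_mul (Eventually.of_forall fun x => ?_) p
  rw [← inv_polyWeight, norm_inv, norm_polyWeight]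
  exact hg.norm_le x

end PolyDecay

lemma exists_polyDecay [NormedSpace ℝ V] [NormedSpace ℝ F] (g : 𝓢(V, F)) (M : ℕ) :
    ∃ C, PolyDecay M C g :=
  ⟨_, fun x => by simpa [polyWeight] using
    SchwartzMap.one_add_le_sup_seminorm_apply (𝕜 := ℝ) (m := (M, 0)) le_rfl le_rfl g x⟩

end PolynomialDecay

section Convolution

variable {V E F G : Type*} [NormedAddCommGroup V] [NormedAddCommGroup E] [NormedSpace ℝ E]
  [NormedAddCommGroup F] [NormedAddCommGroup G] [NormedSpace ℝ G] [MeasurableSpace V]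
  {μ : Measure V} {M : ℕ} {k : V → E}

lemma integrable_of_polyWeight_smul [OpensMeasurableSpace V]
    (hk : Integrable (fun y => polyWeight M y • k y) μ) : Integrable k μ := by
  have hinv : Continuous fun y : V => (polyWeight M y)⁻¹ :=
    (continuous_polyWeight M).inv₀ fun y => (polyWeight_pos M y).ne'
  refine (hk.bdd_smul 1 hinv.aestronglyMeasurable (Eventually.of_forall fun y => ?_)).congr
    (Eventually.of_forall fun y => inv_smul_smul₀ (polyWeight_pos M y).ne' (k y))
  rw [norm_inv, norm_polyWeight]
  exact inv_le_one_of_one_le₀ (one_le_polyWeight M y)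

lemma PolyDecay.integrable_polyWeight_smul [NormedSpace ℝ V] [FiniteDimensional ℝ V]
    [BorelSpace V] [μ.IsAddHaarMeasure] {C : ℝ} (hk : PolyDecay (M + (finrank ℝ V + 1)) C k)
    (hm : AEStronglyMeasurable k μ) : Integrable (fun y => polyWeight M y • k y) μ := by
  have hint : Integrable (fun y : V => C * (1 + ‖y‖) ^ (-((finrank ℝ V + 1 : ℕ) : ℝ))) μ :=
    (integrable_one_add_norm (by simp)).const_mul C
  refine hint.mono' ((continuous_polyWeight M).aestronglyMeasurable.smul hm)
    (Eventually.of_forall fun y => ?_)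
  rw [← inv_polyWeight, ← div_eq_mul_inv, le_div_iff₀' (polyWeight_pos _ y), norm_smul,
    norm_polyWeight, ← mul_assoc, mul_comm (polyWeight _ y), ← polyWeight_add]
  exact hk y

lemma integrable_polyWeight_smul_schwartzMap [NormedSpace ℝ V] [FiniteDimensional ℝ V]
    [BorelSpace V] [μ.IsAddHaarMeasure] (k : 𝓢(V, E)) (M : ℕ) :
    Integrable (fun y => polyWeight M y • k y) μ :=
  (exists_polyDecay k _).choose_spec.integrable_polyWeight_smul k.continuous.aestronglyMeasurable

lemma PolyDecay.convolution {𝕜 : Type*} [NontriviallyNormedField 𝕜] [NormedSpace 𝕜 E]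
    [NormedSpace 𝕜 F] [NormedSpace 𝕜 G] {g : V → F} {C : ℝ} (hg : PolyDecay M C g)
    (L : E →L[𝕜] F →L[𝕜] G) (hk : Integrable (fun y => polyWeight M y • k y) μ) :
    PolyDecay M (‖L‖ * weightedL1Norm μ M k * C) (k ⋆[L, μ] g) := fun x => by
  rw [← norm_polyWeight, ← norm_smul, MeasureTheory.convolution, ← integral_smul, mul_right_comm,
    weightedL1Norm, ← integral_const_mul]
  refine norm_integral_le_of_norm_le (hk.norm.const_mul _) (Eventually.of_forall fun y => ?_)
  calc ‖polyWeight M x • L (k y) (g (x - y))‖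
      ≤ polyWeight M x * (‖L‖ * ‖k y‖ * ‖g (x - y)‖) := by
        rw [norm_smul, norm_polyWeight]
        exact mul_le_mul_of_nonneg_left (L.le_opNorm₂ _ _) (polyWeight_pos M x).le
    _ ≤ polyWeight M y * polyWeight M (x - y) * (‖L‖ * ‖k y‖ * ‖g (x - y)‖) := by
        gcongr
        exact polyWeight_le_mul_sub M x y
    _ = ‖L‖ * ‖polyWeight M y • k y‖ * (polyWeight M (x - y) * ‖g (x - y)‖) := by
        rw [norm_smul, norm_polyWeight]
        ring
    _ ≤ ‖L‖ * ‖polyWeight M y • k y‖ * C := by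
        gcongr
        exact hg (x - y)
    _ = ‖L‖ * C * ‖polyWeight M y • k y‖ := by ring

end Convolution

section Commutation

variable {G 𝕜 : Type*} [AddCommGroup G] [MeasurableSpace G] [MeasurableAdd₂ G] [MeasurableNeg G]
  {μ : Measure G} [μ.IsAddLeftInvariant] [RCLike 𝕜] {a b c : G → 𝕜} {C : ℝ}

lemma convolution_mul_assoc_of_bounded [SFinite μ] (ha : Integrable a μ)
    (hb : Integrable b μ) (hc : Integrable c μ) (hC : ∀ x, ‖c x‖ ≤ C) :
    (a ⋆[mul 𝕜 𝕜, μ] b) ⋆[mul 𝕜 𝕜, μ] c = a ⋆[mul 𝕜 𝕜, μ] (b ⋆[mul 𝕜 𝕜, μ] c) := by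
  ext x
  refine convolution_assoc _ _ _ _ (fun _ _ _ => by simp [mul_assoc]) ha.1 hb.1 hc.1
    (ha.ae_convolution_exists _ hb) (hb.norm.ae_convolution_exists _ hc.norm) ?_
  have hbound (y : G) :
      ‖((fun z => ‖b z‖) ⋆[mul ℝ ℝ, μ] fun z => ‖c z‖) y‖ ≤ ∫ z, ‖b z‖ * C ∂μ := by
    refine norm_integral_le_of_norm_le (hb.norm.mul_const C) (Eventually.of_forall fun z => ?_)
    simpa using mul_le_mul_of_nonneg_left (hC (y - z)) (norm_nonneg (b z))
  refine BddAbove.convolutionExistsAt (s := Set.univ) _ ⟨∫ z, ‖b z‖ * C ∂μ, ?_⟩ .univ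
    (Set.subset_univ _) ha.norm.integrableOn (hb.norm.integrable_convolution _ hc.norm).1
  rintro _ ⟨y, -, rfl⟩
  exact hbound y

lemma convolution_mul_comm [μ.IsNegInvariant] (a b : G → 𝕜) :
    a ⋆[mul 𝕜 𝕜, μ] b = b ⋆[mul 𝕜 𝕜, μ] a := by
  rw [← convolution_flip, ContinuousLinearMap.flip_mul]

lemma convolution_mul_left_comm_of_bounded [SFinite μ] [μ.IsNegInvariant] (ha : Integrable a μ)
    (hb : Integrable b μ) (hc : Integrable c μ) (hC : ∀ x, ‖c x‖ ≤ C) :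
    a ⋆[mul 𝕜 𝕜, μ] (b ⋆[mul 𝕜 𝕜, μ] c) = b ⋆[mul 𝕜 𝕜, μ] (a ⋆[mul 𝕜 𝕜, μ] c) := by
  rw [← convolution_mul_assoc_of_bounded ha hb hc hC,
    ← convolution_mul_assoc_of_bounded hb ha hc hC, convolution_mul_comm a b]

end Commutation

section Dilation

variable {V E : Type*} [NormedAddCommGroup V] [NormedSpace ℝ V] [NormedAddCommGroup E]

/-- The `L¹`-normalised dilation `x ↦ r ^ d k(r x)`, where `d` is the dimension of `V`; it
concentrates `k` at the origin as `r → ∞`. -/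
def dilate [NormedSpace ℝ E] (r : ℝ) (k : V → E) (x : V) : E :=
  r ^ finrank ℝ V • k (r • x)

/-- `dilate r k` as a Schwartz function, for a Schwartz function `k`. -/
def schwartzDilate [NormedSpace ℝ E] {r : ℝ} (hr : r ≠ 0) (k : 𝓢(V, E)) : 𝓢(V, E) :=
  (r ^ finrank ℝ V) • SchwartzMap.compCLMOfContinuousLinearEquiv ℝ
    (ContinuousLinearEquiv.smulLeft (Units.mk0 r hr)) k

lemma coe_schwartzDilate [NormedSpace ℝ E] {r : ℝ} (hr : r ≠ 0) (k : 𝓢(V, E)) :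
    ⇑(schwartzDilate hr k) = dilate r k :=
  rfl

lemma norm_polyWeight_smul_dilate_le [NormedSpace ℝ E] {r : ℝ} (hr : 1 ≤ r) (M : ℕ) (k : V → E)
    (x : V) :
    ‖polyWeight M x • dilate r k x‖ ≤ ‖dilate r (fun y => polyWeight M y • k y) x‖ := by
  have hnorm : ‖x‖ ≤ ‖r • x‖ := by
    rw [norm_smul, Real.norm_of_nonneg (zero_le_one.trans hr)]
    exact le_mul_of_one_le_left (norm_nonneg x) hr
  rw [dilate, dilate, smul_comm, norm_smul, norm_smul, norm_smul, norm_smul, norm_polyWeight,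
    norm_polyWeight, polyWeight, polyWeight]
  gcongr

section Integral

variable [NormedSpace ℝ E] [MeasurableSpace V] [BorelSpace V] [FiniteDimensional ℝ V]
  {μ : Measure V} [μ.IsAddHaarMeasure] {M : ℕ} {r : ℝ} {k : V → E}

lemma integrable_dilate (hr : r ≠ 0) (hk : Integrable k μ) :
    Integrable (dilate r k) μ :=
  ((integrable_comp_smul_iff μ k hr).2 hk).smul (r ^ finrank ℝ V)

lemma integral_dilate (hr : 0 < r) (k : V → E) : ∫ x, dilate r k x ∂μ = ∫ x, k x ∂μ := by
  simp only [dilate]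
  rw [integral_smul, Measure.integral_comp_smul_of_nonneg μ k r (hR := hr.le),
    smul_inv_smul₀ (pow_pos hr _).ne']

lemma integrable_polyWeight_smul_dilate (hr : 1 ≤ r)
    (hk : Integrable (fun x => polyWeight M x • k x) μ) :
    Integrable (fun x => polyWeight M x • dilate r k x) μ :=
  have hr₀ : r ≠ 0 := (zero_lt_one.trans_le hr).ne'
  (integrable_dilate hr₀ hk).mono
    ((continuous_polyWeight M).aestronglyMeasurable.smul
      (integrable_dilate hr₀ (integrable_of_polyWeight_smul hk)).1)
    (Eventually.of_forall (norm_polyWeight_smul_dilate_le hr M k))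

lemma weightedL1Norm_dilate_le (hr : 1 ≤ r) (hk : Integrable (fun x => polyWeight M x • k x) μ) :
    weightedL1Norm μ M (dilate r k) ≤ weightedL1Norm μ M k := by
  have hr₀ : 0 < r := zero_lt_one.trans_le hr
  calc weightedL1Norm μ M (dilate r k)
      ≤ ∫ x, ‖dilate r (fun y => polyWeight M y • k y) x‖ ∂μ :=
        integral_mono (integrable_polyWeight_smul_dilate hr hk).norm
          (integrable_dilate hr₀.ne' hk).norm (norm_polyWeight_smul_dilate_le hr M k)
    _ = ∫ x, dilate r (fun y => ‖polyWeight M y • k y‖) x ∂μ := by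
        simp [dilate, norm_smul, abs_of_pos hr₀]
    _ = weightedL1Norm μ M k := integral_dilate hr₀ _

lemma PolyDecay.dilate_convolution {𝕜 F G : Type*} [NontriviallyNormedField 𝕜]
    [NormedSpace 𝕜 E] [NormedAddCommGroup F] [NormedSpace 𝕜 F] [NormedAddCommGroup G]
    [NormedSpace ℝ G] [NormedSpace 𝕜 G] {g : V → F} {C : ℝ} (hg : PolyDecay M C g)
    (L : E →L[𝕜] F →L[𝕜] G) (hk : Integrable (fun x => polyWeight M x • k x) μ) (hr : 1 ≤ r) :
    PolyDecay M (‖L‖ * weightedL1Norm μ M k * C) (dilate r k ⋆[L, μ] g) := fun x => by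
  refine (hg.convolution L (integrable_polyWeight_smul_dilate hr hk) x).trans ?_
  have := hg.nonneg
  gcongr
  exact weightedL1Norm_dilate_le hr hk

end Integral

end Dilation

section FourierSide

open scoped ContDiff

variable {V : Type*} [NormedAddCommGroup V] [InnerProductSpace ℝ V]

lemma exists_schwartzMap_eq_smul {F : Type*} [NormedAddCommGroup F] [NormedSpace ℝ F]
    {g : V → ℝ} {k : V → F} (hk : ContDiff ℝ ∞ k) (hk_supp : HasCompactSupport k)
    (hg : ContDiff ℝ ∞ g) (hg_ne : ∀ ξ ∈ tsupport k, g ξ ≠ 0) :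
    ∃ φ : 𝓢(V, F), ∀ ξ, k ξ = g ξ • φ ξ := by
  have hsmooth : ContDiff ℝ ∞ fun ξ => (g ξ)⁻¹ • k ξ := by
    refine contDiff_iff_contDiffAt.2 fun ξ => ?_
    by_cases hξ : ξ ∈ tsupport k
    · exact (hg.contDiffAt.inv (hg_ne ξ hξ)).smul hk.contDiffAt
    · refine (contDiffAt_const (c := 0)).congr_of_eventuallyEq ?_
      filter_upwards [notMem_tsupport_iff_eventuallyEq.1 hξ] with η hη
      rw [hη, Pi.zero_apply, smul_zero]
  refine ⟨HasCompactSupport.toSchwartzMap (hk_supp.smul_left (f := fun ξ => (g ξ)⁻¹)) hsmooth,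
    fun ξ => ?_⟩
  by_cases hξ : k ξ = 0
  · simp [hξ]
  · exact (smul_inv_smul₀ (hg_ne ξ (subset_tsupport k hξ)) (k ξ)).symm

variable [FiniteDimensional ℝ V] [MeasurableSpace V] [BorelSpace V]

lemma fourier_dilate {E : Type*} [NormedAddCommGroup E] [NormedSpace ℂ E] {r : ℝ} (hr : 0 < r)
    (k : V → E) (ξ : V) : 𝓕 (dilate r k) ξ = 𝓕 k (r⁻¹ • ξ) := by
  rw [Real.fourier_eq, Real.fourier_eq,
    ← integral_dilate hr fun v => 𝐞 (-inner ℝ v (r⁻¹ • ξ)) • k v]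
  congr with v
  simp only [dilate, inner_smul_left, inner_smul_right, conj_trivial]
  rw [inv_mul_cancel_left₀ hr.ne', smul_comm]

lemma dilate_convolution_eq_smul {m : V → ℝ} {c r : ℝ} (hr : 0 < r)
    (hm : ∀ ξ, m (r⁻¹ • ξ) = c * m ξ) {ψ φ f g : 𝓢(V, ℂ)} (hψ : ∀ ξ, 𝓕 ψ ξ = m ξ • 𝓕 φ ξ)
    (hg : ∀ ξ, 𝓕 g ξ = m ξ • 𝓕 f ξ) :
    dilate r ψ ⋆[mul ℂ ℂ, volume] f = c • (dilate r φ ⋆[mul ℂ ℂ, volume] g) := by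
  have hfourier :
      𝓕 (SchwartzMap.convolution (mul ℂ ℂ) (schwartzDilate hr.ne' ψ) f) =
        𝓕 (c • SchwartzMap.convolution (mul ℂ ℂ) (schwartzDilate hr.ne' φ) g) := by
    ext ξ
    simp only [FourierTransform.fourier_smul, SchwartzMap.fourier_convolution,
      SchwartzMap.pairing_apply_apply, ContinuousLinearMap.mul_apply', smul_apply, hg]
    simp only [SchwartzMap.fourier_coe] at hψ ⊢
    rw [coe_schwartzDilate, coe_schwartzDilate, fourier_dilate hr, fourier_dilate hr, hψ, hm,
      mul_smul, smul_mul_assoc, smul_mul_assoc, mul_smul_comm]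
  have hconv := congrArg (fun u : 𝓢(V, ℂ) => 𝓕⁻ u) hfourier
  simp only [FourierTransform.fourierInv_fourier_eq] at hconv
  ext x
  simpa [SchwartzMap.convolution_apply, coe_schwartzDilate] using DFunLike.congr_fun hconv x

lemma exists_dilate_convolution_eq_smul {ψ : 𝓢(V, ℂ)}
    (hψ_supp : HasCompactSupport (𝓕 ψ : 𝓢(V, ℂ)))
    (hψ_zero : 0 ∉ tsupport (𝓕 ψ : 𝓢(V, ℂ))) (f : 𝓢(V, ℂ)) (N : ℕ) :
    ∃ φ g : 𝓢(V, ℂ), ∀ r : ℝ, 0 < r →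
      dilate r ψ ⋆[mul ℂ ℂ, volume] f =
        (r⁻¹ ^ 2) ^ N • (dilate r φ ⋆[mul ℂ ℂ, volume] g) := by
  have hm : ContDiff ℝ ∞ fun ξ : V => (‖ξ‖ ^ 2) ^ N := (contDiff_norm_sq ℝ).pow N
  have hm_growth : (fun ξ : V => (‖ξ‖ ^ 2) ^ N).HasTemperateGrowth := by fun_prop
  obtain ⟨φ, hφ⟩ := exists_schwartzMap_eq_smul ((𝓕 ψ : 𝓢(V, ℂ)).smooth _) hψ_supp hm
    fun ξ hξ => pow_ne_zero _ (pow_ne_zero _ (norm_ne_zero_iff.2 fun h => hψ_zero (h ▸ hξ)))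
  refine ⟨𝓕⁻ φ, SchwartzMap.fourierMultiplierCLM ℂ (fun ξ : V => (‖ξ‖ ^ 2) ^ N) f,
    fun r hr => dilate_convolution_eq_smul hr (m := fun ξ => (‖ξ‖ ^ 2) ^ N) (fun ξ => ?_)
      (fun ξ => ?_) fun ξ => ?_⟩
  · simp [norm_smul, mul_pow]
  · rw [hφ, FourierTransform.fourier_fourierInv_eq]
  · rw [SchwartzMap.fourierMultiplierCLM_apply, FourierTransform.fourier_fourierInv_eq,
      SchwartzMap.smulLeftCLM_apply_apply hm_growth]

lemma exists_polyDecay_dilate_convolution {ψ : 𝓢(V, ℂ)}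
    (hψ_supp : HasCompactSupport (𝓕 ψ : 𝓢(V, ℂ)))
    (hψ_zero : 0 ∉ tsupport (𝓕 ψ : 𝓢(V, ℂ))) (f : 𝓢(V, ℂ)) (N M : ℕ) :
    ∃ K, ∀ r : ℝ, 1 ≤ r →
      PolyDecay M (K * (r⁻¹ ^ 2) ^ N) (dilate r ψ ⋆[mul ℂ ℂ, volume] f) := by
  obtain ⟨φ, g, hφg⟩ := exists_dilate_convolution_eq_smul hψ_supp hψ_zero f N
  obtain ⟨C, hC⟩ := exists_polyDecay g M
  refine ⟨weightedL1Norm volume M φ * C, fun r hr => ?_⟩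
  have hdecay := (hC.dilate_convolution (μ := volume) (mul ℂ ℂ)
    (integrable_polyWeight_smul_schwartzMap φ M) hr).const_smul ((r⁻¹ ^ 2) ^ N)
  rw [← hφg r (zero_lt_one.trans_le hr), ContinuousLinearMap.opNorm_mul, one_mul, mul_comm,
    Real.norm_of_nonneg (by positivity)] at hdecay
  exact hdecay

end FourierSide

section HeatKernel

variable {V : Type*} [NormedAddCommGroup V] [NormedSpace ℝ V] {t : ℝ}

/-- The heat kernel `h_t(x) = (4πt) ^ (-d / 2) exp(-‖x‖² / (4t))` on a space `V` of dimension `d`,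
so that `heatOp n t` is convolution with it on `ℝⁿ`. -/
def heatKernel (t : ℝ) (x : V) : ℝ :=
  (4 * π * t) ^ (-(finrank ℝ V : ℝ) / 2) * Real.exp (-‖x‖ ^ 2 / (4 * t))

lemma heatOp_eq_convolution (t : ℝ) (f : Rn n → ℝ) :
    heatOp n t f = heatKernel t ⋆[mul ℝ ℝ, volume] f := by
  unfold heatOp heatKernel
  simp only [finrank_euclideanSpace_fin]

lemma continuous_heatKernel (t : ℝ) : Continuous (heatKernel t : V → ℝ) := by
  unfold heatKernel
  fun_prop

lemma heatKernel_eq_dilate (ht : 0 < t) :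
    (heatKernel t : V → ℝ) = dilate (√t)⁻¹ (heatKernel 1) := by
  have hpow : t ^ (-(finrank ℝ V : ℝ) / 2) = (√t)⁻¹ ^ finrank ℝ V := by
    rw [Real.sqrt_eq_rpow, ← Real.rpow_neg ht.le, ← Real.rpow_natCast, ← Real.rpow_mul ht.le]
    congr 1
    ring
  ext x
  have hexp : -‖(√t)⁻¹ • x‖ ^ 2 / (4 * 1) = -‖x‖ ^ 2 / (4 * t) := by
    rw [norm_smul, mul_pow, norm_inv, Real.norm_of_nonneg (Real.sqrt_nonneg t), inv_pow,
      Real.sq_sqrt ht.le]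
    field_simp
  rw [heatKernel, dilate, heatKernel, hexp, Real.mul_rpow (by positivity) ht.le, hpow, mul_one,
    smul_eq_mul]
  ring

lemma exists_polyDecay_heatKernel (ht : 0 < t) (M : ℕ) :
    ∃ C, PolyDecay M C (heatKernel t : V → ℝ) := by
  refine ⟨(4 * π * t) ^ (-(finrank ℝ V : ℝ) / 2) * (M.factorial * Real.exp (1 + t)), fun x => ?_⟩
  have hweight : polyWeight M x ≤ M.factorial * Real.exp (1 + ‖x‖) :=
    (div_le_iff₀' (by positivity)).1 (Real.pow_div_factorial_le_exp (1 + ‖x‖) (by positivity) M)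
  have hexponent : 1 + ‖x‖ + -‖x‖ ^ 2 / (4 * t) ≤ 1 + t := by
    have hsq : 1 + t - (1 + ‖x‖ + -‖x‖ ^ 2 / (4 * t)) = (‖x‖ - 2 * t) ^ 2 / (4 * t) := by
      field_simp
      ring
    linarith [show 0 ≤ (‖x‖ - 2 * t) ^ 2 / (4 * t) by positivity]
  rw [heatKernel, Real.norm_of_nonneg (by positivity), mul_left_comm]
  refine mul_le_mul_of_nonneg_left ?_ (by positivity)
  calc polyWeight M x * Real.exp (-‖x‖ ^ 2 / (4 * t))
      ≤ M.factorial * Real.exp (1 + ‖x‖) * Real.exp (-‖x‖ ^ 2 / (4 * t)) := by gcongr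
    _ = M.factorial * Real.exp (1 + ‖x‖ + -‖x‖ ^ 2 / (4 * t)) := by rw [mul_assoc, ← Real.exp_add]
    _ ≤ M.factorial * Real.exp (1 + t) := by gcongr

variable [FiniteDimensional ℝ V] [MeasurableSpace V] [BorelSpace V] {μ : Measure V}
  [μ.IsAddHaarMeasure]

lemma integrable_polyWeight_smul_heatKernel (ht : 0 < t) (M : ℕ) :
    Integrable (fun x : V => polyWeight M x • heatKernel t x) μ :=
  (exists_polyDecay_heatKernel ht _).choose_spec.integrable_polyWeight_smul
    (continuous_heatKernel t).aestronglyMeasurable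

lemma PolyDecay.heatKernel_convolution {M : ℕ} {C : ℝ} {g : V → ℝ} (hg : PolyDecay M C g)
    (ht : t ∈ Set.Ioc 0 1) :
    PolyDecay M (weightedL1Norm μ M (heatKernel 1) * C) (heatKernel t ⋆[mul ℝ ℝ, μ] g) := by
  rw [heatKernel_eq_dilate ht.1]
  simpa only [ContinuousLinearMap.opNorm_mul, one_mul] using
    hg.dilate_convolution (mul ℝ ℝ) (integrable_polyWeight_smul_heatKernel one_pos M)
      ((one_le_inv₀ (Real.sqrt_pos.2 ht.1)).2 (Real.sqrt_le_one.2 ht.2))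

end HeatKernel

section LittlewoodPaley

lemma lpKernel_eq_dilate (ψ : 𝓢(Rn n, ℝ)) (j : ℤ) : lpKernel ψ j = dilate ((2 : ℝ) ^ j) ψ := by
  ext x
  rw [lpKernel, dilate, finrank_euclideanSpace_fin, zpow_mul, zpow_natCast, smul_eq_mul]

lemma lpProj_heatOp (ψ : 𝓢(Rn n, ℝ)) (j : ℤ) {t : ℝ} (ht : 0 < t) {f : Rn n → ℝ}
    (hf : Integrable f) {C : ℝ} (hC : ∀ x, ‖f x‖ ≤ C) :
    lpProj ψ j (heatOp n t f) = heatOp n t (lpProj ψ j f) := by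
  rw [heatOp_eq_convolution, heatOp_eq_convolution, lpProj, lpProj, lpKernel_eq_dilate]
  exact convolution_mul_left_comm_of_bounded
    (integrable_dilate (zpow_ne_zero j two_ne_zero) ψ.integrable)
    (integrable_of_polyWeight_smul (integrable_polyWeight_smul_heatKernel ht 0)) hf hC

/-- A real Schwartz function as a complex one, whose Fourier transform is therefore again a
Schwartz function. -/
def complexify (f : 𝓢(Rn n, ℝ)) : 𝓢(Rn n, ℂ) :=
  f.postcompCLM Complex.ofRealCLM

lemma coe_fourier_complexify (f : 𝓢(Rn n, ℝ)) : ⇑(𝓕 (complexify f) : 𝓢(Rn n, ℂ)) = ftC f :=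
  rfl

lemma norm_convolution_ofReal {V : Type*} [AddGroup V] [MeasurableSpace V] {μ : Measure V}
    (k f : V → ℝ) (x : V) :
    ‖((fun y => (k y : ℂ)) ⋆[mul ℂ ℂ, μ] fun y => (f y : ℂ)) x‖ = ‖(k ⋆[mul ℝ ℝ, μ] f) x‖ := by
  rw [← Complex.norm_real]
  simp only [MeasureTheory.convolution, ← integral_complex_ofReal, ContinuousLinearMap.mul_apply',
    Complex.ofReal_mul]

lemma exists_polyDecay_lpProj {ψ : 𝓢(Rn n, ℝ)} (hψ_supp : HasCompactSupport (ftC ψ))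
    (hψ_zero : 0 ∉ tsupport (ftC ψ)) (f : 𝓢(Rn n, ℝ)) (N M : ℕ) :
    ∃ K, ∀ j : ℕ, PolyDecay M (K * (((2 : ℝ) ^ j)⁻¹ ^ 2) ^ N) (lpProj ψ j f) := by
  rw [← coe_fourier_complexify] at hψ_supp hψ_zero
  obtain ⟨K, hK⟩ := exists_polyDecay_dilate_convolution hψ_supp hψ_zero (complexify f) N M
  refine ⟨K, fun j x => ?_⟩
  have hdilate : dilate ((2 : ℝ) ^ j) (complexify ψ) = fun y => (lpKernel ψ j y : ℂ) := by
    ext y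
    rw [lpKernel_eq_dilate, zpow_natCast, dilate, dilate, smul_eq_mul, Complex.ofReal_mul,
      ← Complex.real_smul]
    rfl
  rw [lpProj, ← norm_convolution_ofReal, ← hdilate]
  exact hK (2 ^ j) (one_le_pow₀ one_le_two) x

lemma IsLPF.hasCompactSupport_ftC {ψ₀ : 𝓢(Rn n, ℝ)} (hψ : IsLPF n ψ₀) :
    HasCompactSupport (ftC ψ₀) :=
  .of_support_subset_isCompact (isCompact_closedBall 0 2) fun ξ hξ =>
    mem_closedBall_zero_iff.2 (hψ.ft_supp ξ hξ).2.le

lemma IsLPF.zero_notMem_tsupport_ftC {ψ₀ : 𝓢(Rn n, ℝ)} (hψ : IsLPF n ψ₀) :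
    0 ∉ tsupport (ftC ψ₀) := by
  refine notMem_tsupport_iff_eventuallyEq.2 ?_
  filter_upwards [Metric.ball_mem_nhds 0 (one_half_pos (α := ℝ))] with ξ hξ
  by_contra hne
  exact (hψ.ft_supp ξ hne).1.not_gt (mem_ball_zero_iff.1 hξ)

end LittlewoodPaley

section BesovNorm

/-- The `ℓ^q` norm of a sequence in `[0,∞]`, with the conventions of `besovNorm`. -/
def lqNorm (q : ℝ≥0∞) (a : ℕ → ℝ≥0∞) : ℝ≥0∞ :=
  if q = ∞ then ⨆ j, a j else (∑' j, a j ^ q.toReal) ^ (1 / q.toReal)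

lemma besovNorm_eq_add_lqNorm (ψ Ψ : 𝓢(Rn n, ℝ)) (s : ℝ) (p q : ℝ≥0∞) (g : Rn n → ℝ) :
    besovNorm ψ Ψ s p q g = eLpNorm (Ψ ⋆[mul ℝ ℝ, volume] g) p volume +
      lqNorm q fun j =>
        ENNReal.ofReal ((2 : ℝ) ^ ((j : ℝ) * s)) * eLpNorm (lpProj ψ j g) p volume :=
  rfl

lemma lqNorm_mono {q : ℝ≥0∞} {a b : ℕ → ℝ≥0∞} (hab : a ≤ b) : lqNorm q a ≤ lqNorm q b := by
  unfold lqNorm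
  split_ifs
  · exact iSup_mono hab
  · gcongr with j
    exact hab j

lemma lqNorm_geometric_ne_top {q B ρ : ℝ≥0∞} (hq : q ≠ 0) (hB : B ≠ ∞) (hρ : ρ < 1) :
    lqNorm q (fun j => B * ρ ^ j) ≠ ∞ := by
  unfold lqNorm
  split_ifs with hq'
  · exact ne_top_of_le_ne_top hB (iSup_le fun j => mul_le_of_le_one_right' (pow_le_one' hρ.le j))
  · have hq₀ : 0 < q.toReal := ENNReal.toReal_pos hq hq'
    have hterm (j : ℕ) : (B * ρ ^ j) ^ q.toReal = B ^ q.toReal * (ρ ^ q.toReal) ^ j := by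
      rw [ENNReal.mul_rpow_of_nonneg _ _ hq₀.le, ← ENNReal.rpow_natCast, ← ENNReal.rpow_natCast,
        ← ENNReal.rpow_mul, ← ENNReal.rpow_mul, mul_comm (j : ℝ)]
    have hratio : 1 - ρ ^ q.toReal ≠ 0 :=
      (tsub_pos_of_lt (ENNReal.rpow_lt_one hρ hq₀)).ne'
    simp only [hterm, ENNReal.tsum_mul_left, ENNReal.tsum_geometric]
    exact ENNReal.rpow_ne_top_of_nonneg (by positivity)
      (ENNReal.mul_ne_top (ENNReal.rpow_ne_top_of_nonneg hq₀.le hB) (ENNReal.inv_ne_top.2 hratio))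

lemma two_rpow_mul_inv_sq_pow_le {s : ℝ} {N : ℕ} (hN : s + 1 ≤ 2 * N) (j : ℕ) :
    (2 : ℝ) ^ ((j : ℝ) * s) * (((2 : ℝ) ^ j)⁻¹ ^ 2) ^ N ≤ 2⁻¹ ^ j := by
  have hinv (m : ℕ) : (2⁻¹ : ℝ) ^ m = 2 ^ (-(m : ℝ)) := by
    rw [inv_pow, Real.rpow_neg zero_le_two, Real.rpow_natCast]
  rw [← inv_pow, ← pow_mul, ← pow_mul, hinv, hinv, ← Real.rpow_add two_pos]
  refine Real.rpow_le_rpow_of_exponent_le one_le_two ?_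
  push_cast
  nlinarith [mul_le_mul_of_nonneg_left hN (Nat.cast_nonneg (α := ℝ) j)]

lemma besovNorm_le_of_polyDecay {ψ Ψ : 𝓢(Rn n, ℝ)} {g : Rn n → ℝ} {M N : ℕ} {C K s : ℝ}
    (hN : s + 1 ≤ 2 * N) (hlow : PolyDecay M C (Ψ ⋆[mul ℝ ℝ, volume] g))
    (hlp : ∀ j : ℕ, PolyDecay M (K * (((2 : ℝ) ^ j)⁻¹ ^ 2) ^ N) (lpProj ψ j g)) (p q : ℝ≥0∞) :
    besovNorm ψ Ψ s p q g ≤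
      ENNReal.ofReal C * eLpNorm (fun x : Rn n => (1 + ‖x‖) ^ (-(M : ℝ))) p volume +
        lqNorm q fun j => ENNReal.ofReal K *
          eLpNorm (fun x : Rn n => (1 + ‖x‖) ^ (-(M : ℝ))) p volume * ENNReal.ofReal 2⁻¹ ^ j := by
  rw [besovNorm_eq_add_lqNorm]
  refine add_le_add (hlow.eLpNorm_le p volume) (lqNorm_mono fun j => ?_)
  set W := eLpNorm (fun x : Rn n => (1 + ‖x‖) ^ (-(M : ℝ))) p volume
  calc ENNReal.ofReal ((2 : ℝ) ^ ((j : ℝ) * s)) * eLpNorm (lpProj ψ j g) p volume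
      ≤ ENNReal.ofReal ((2 : ℝ) ^ ((j : ℝ) * s)) *
          (ENNReal.ofReal (K * (((2 : ℝ) ^ j)⁻¹ ^ 2) ^ N) * W) := by
        gcongr
        exact (hlp j).eLpNorm_le p volume
    _ = ENNReal.ofReal K * W *
          ENNReal.ofReal ((2 : ℝ) ^ ((j : ℝ) * s) * (((2 : ℝ) ^ j)⁻¹ ^ 2) ^ N) := by
        rw [ENNReal.ofReal_mul' (by positivity), ENNReal.ofReal_mul (by positivity)]
        ring
    _ ≤ ENNReal.ofReal K * W * ENNReal.ofReal 2⁻¹ ^ j := by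
        rw [← ENNReal.ofReal_pow (by positivity)]
        gcongr
        exact two_rpow_mul_inv_sq_pow_le hN j

lemma exists_besovNorm_heatOp_le {ψ : 𝓢(Rn n, ℝ)} (hψ_supp : HasCompactSupport (ftC ψ))
    (hψ_zero : 0 ∉ tsupport (ftC ψ)) (Ψ : 𝓢(Rn n, ℝ)) (s : ℝ) (p : ℝ≥0∞) {q : ℝ≥0∞} (hq : q ≠ 0)
    (f : 𝓢(Rn n, ℝ)) :
    ∃ B ≠ ∞, ∀ t ∈ Set.Ioc (0 : ℝ) 1, besovNorm ψ Ψ s p q (heatOp n t f) ≤ B := by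
  obtain ⟨M, hM⟩ := (inferInstance :
    (volume : Measure (Rn n)).HasTemperateGrowth).exists_eLpNorm_lt_top p
  obtain ⟨N, hN⟩ := exists_nat_ge ((s + 1) / 2)
  obtain ⟨C, hC⟩ := exists_polyDecay f M
  obtain ⟨K, hK⟩ := exists_polyDecay_lpProj hψ_supp hψ_zero f N M
  set A := weightedL1Norm (volume : Measure (Rn n)) M (heatKernel 1)
  set D := weightedL1Norm volume M Ψ
  refine ⟨_, ?_, fun t ht => besovNorm_le_of_polyDecay (M := M) (N := N) (C := D * (A * C))
    (K := A * K) (by linarith) ?_ (fun j => ?_) p q⟩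
  · refine ENNReal.add_ne_top.2 ⟨ENNReal.mul_ne_top ENNReal.ofReal_ne_top hM.ne, ?_⟩
    exact lqNorm_geometric_ne_top hq (ENNReal.mul_ne_top ENNReal.ofReal_ne_top hM.ne)
      (ENNReal.ofReal_lt_one.2 two_inv_lt_one)
  · rw [heatOp_eq_convolution]
    simpa using (hC.heatKernel_convolution (μ := volume) ht).convolution (mul ℝ ℝ)
      (integrable_polyWeight_smul_schwartzMap Ψ M)
  · rw [lpProj_heatOp ψ j ht.1 f.integrable hC.norm_le_const, heatOp_eq_convolution, mul_assoc]
    exact (hK j).heatKernel_convolution ht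

lemma tendsto_ofReal_rpow_mul_of_le {F : ℝ → ℝ≥0∞} {B : ℝ≥0∞} {α : ℝ} (hα : 0 < α) (hB : B ≠ ∞)
    (hF : ∀ᶠ t in 𝓝[>] 0, F t ≤ B) :
    Tendsto (fun t : ℝ => ENNReal.ofReal (t ^ α) * F t) (𝓝[>] 0) (𝓝 0) := by
  have hpow : Tendsto (fun t : ℝ => t ^ α) (𝓝[>] 0) (𝓝 0) := by
    simpa [hα.ne'] using
      ((Real.continuousAt_rpow_const 0 α (Or.inr hα.le)).tendsto.mono_left nhdsWithin_le_nhds)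
  have hbound : Tendsto (fun t : ℝ => ENNReal.ofReal (t ^ α) * B) (𝓝[>] 0) (𝓝 0) := by
    simpa using ENNReal.Tendsto.mul_const (ENNReal.tendsto_ofReal hpow) (Or.inr hB)
  refine tendsto_of_tendsto_of_tendsto_of_le_of_le' tendsto_const_nhds hbound
    (Eventually.of_forall fun _ => zero_le) ?_
  filter_upwards [hF] with t ht
  gcongr

end BesovNorm

theorem besov_heat_vanishing_limit_general {ψ₀ Ψ : 𝓢(Rn n, ℝ)} (hψ : IsLPF n ψ₀)
    (_hΨ : IsLowPiece ψ₀ Ψ) {p q : ℝ≥0∞} (_hp : p ≠ 0) (hq : q ≠ 0) (s : ℝ) {α : ℝ} (hα : 0 < α)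
    (f : 𝓢(Rn n, ℝ)) :
    Tendsto (fun t : ℝ => ENNReal.ofReal (t ^ α) * besovNorm ψ₀ Ψ s p q (heatOp n t f))
      (𝓝[>] 0) (𝓝 0) := by
  obtain ⟨B, hB, hbound⟩ := exists_besovNorm_heatOp_le hψ.hasCompactSupport_ftC
    hψ.zero_notMem_tsupport_ftC Ψ s p hq f
  refine tendsto_ofReal_rpow_mul_of_le hα hB ?_
  filter_upwards [Ioc_mem_nhdsGT one_pos] using hbound

/-- For `1 ≤ p₁ ≤ p₂ < ∞`, `0 < s₁ ≤ s₂`, `q ∈ [1,∞)` and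
`σ = s₂ − s₁ + n/p₁ − n/p₂ > 0`, one has `t^{σ/2} ‖e^{tΔ}f‖_{B^{s₂}_{p₂,q}} → 0` as
`t → 0⁺`, for every Schwartz `f`. -/
theorem besov_heat_vanishing_limit
    (n : ℕ) (hn : 1 ≤ n) (ψ₀ Ψ : SchwartzMap (Rn n) ℝ)
    (hψ : IsLPF n ψ₀) (hΨ : IsLowPiece ψ₀ Ψ)
    (p₁ p₂ : ℝ≥0∞) (hp₁ : 1 ≤ p₁) (hp₁₂ : p₁ ≤ p₂) (hp₂ : p₂ < ∞)
    (s₁ s₂ : ℝ) (hs₁ : 0 < s₁) (hs₁₂ : s₁ ≤ s₂)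
    (q : ℝ≥0∞) (hq : 1 ≤ q) (hq' : q < ∞)
    (σ : ℝ) (hσdef : σ = s₂ - s₁ + (n:ℝ)/p₁.toReal - (n:ℝ)/p₂.toReal) (hσ : 0 < σ)
    (f : SchwartzMap (Rn n) ℝ) :
    Filter.Tendsto
      (fun t : ℝ => ENNReal.ofReal (t ^ (σ/2)) *
        besovNorm ψ₀ Ψ s₂ p₂ q (heatOp n t (fun x => f x)))
      (nhdsWithin 0 (Set.Ioi 0)) (nhds 0) := by
  exact besov_heat_vanishing_limit_general hψ hΨ (zero_lt_one.trans_le (hp₁.trans hp₁₂)).ne'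
    (zero_lt_one.trans_le hq).ne' s₂ (half_pos hσ) f
end
end

section
/- Let n ≥ 1, r > 2, and q ∈ [1,∞). There is a constant C > 0, depending only on n, r, q, such that for every sequence (a_j)_{j∈ℤ} of nonnegative reals with a_j = 0 for j < 0: ( ∑_{j≥0} ( ∑_{k≥−2} ∑_{l=−1}^{1} 2^{(r−2)j} · 2^{(3+n/2)(j+k+l)} · a_{j+k} · a_{j+k+l} )^q )^{1/q} ≤ C · ( sup_{m≥0} 2^{(1+n/2)m} a_m ) · ( ∑_{j≥0} ( 2^{rj} a_j )^q )^{1/q}, the inequality being interpreted in [0,∞]. -/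
open scoped ENNReal

noncomputable section

/-!
With `p = j + k - 2`, the `(j, k, l)` term is the weight `2 ^ (2 * l - (r - 2) * (k - 2))` times
`2 ^ ((1 + n / 2) * (p + l)) * a (p + l)`, at most the supremum, times `2 ^ (r * p) * a p`.
Up to the supremum, the left-hand side is therefore a weighted superposition of shifts of the
sequence `2 ^ (r * j) * a j`. Shifting a sequence supported on `j ≥ 0` and restricting it to `j ≥ 0`
does not increase its `ℓ^q` norm, so Minkowski's inequality bounds the `ℓ^q` norm of the
superposition by the total weight, a geometric series that converges because `r > 2`.
-/

open Filter Topology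

section Minkowski

variable {ι κ : Type*} {q : ℝ}

theorem Lp_finset_tsum_le_tsum_Lp (hq : 1 ≤ q) (s : Finset ι) (F : κ → ι → ℝ≥0∞) :
    (∑ i ∈ s, (∑' k, F k i) ^ q) ^ (1 / q) ≤ ∑' k, (∑ i ∈ s, F k i ^ q) ^ (1 / q) := by
  have hq₀ : 0 < q := by positivity
  have finite_le (t : Finset κ) : (∑ i ∈ s, (∑ k ∈ t, F k i) ^ q) ^ (1 / q) ≤
      ∑ k ∈ t, (∑ i ∈ s, F k i ^ q) ^ (1 / q) := by
    simpa only [Finset.sum_apply] using Finset.le_sum_of_subadditive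
      (fun f : ι → ℝ≥0∞ ↦ (∑ i ∈ s, f i ^ q) ^ (1 / q)) (by simp [hq₀])
      (fun f g ↦ ENNReal.Lp_add_le s f g hq) t F
  have tendsto_Lp : Tendsto (fun t : Finset κ ↦ (∑ i ∈ s, (∑ k ∈ t, F k i) ^ q) ^ (1 / q)) atTop
      (𝓝 ((∑ i ∈ s, (∑' k, F k i) ^ q) ^ (1 / q))) :=
    (tendsto_finsetSum s fun i _ ↦
      (ENNReal.summable (f := fun k ↦ F k i)).hasSum.ennrpow_const q).ennrpow_const _
  exact le_of_tendsto' tendsto_Lp fun t ↦ (finite_le t).trans (ENNReal.sum_le_tsum t)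

theorem Lp_tsum_le_tsum_Lp (hq : 1 ≤ q) (F : κ → ι → ℝ≥0∞) :
    (∑' i, (∑' k, F k i) ^ q) ^ (1 / q) ≤ ∑' k, (∑' i, F k i ^ q) ^ (1 / q) := by
  have tendsto_Lp :=
    (ENNReal.summable (f := fun i ↦ (∑' k, F k i) ^ q)).hasSum.ennrpow_const (1 / q)
  refine le_of_tendsto' tendsto_Lp fun s ↦ (Lp_finset_tsum_le_tsum_Lp hq s F).trans ?_
  gcongr
  exact ENNReal.sum_le_tsum s

end Minkowski

theorem tsum_nat_add_le_tsum_nat {f : ℤ → ℝ≥0∞} (hf : ∀ j < 0, f j = 0) (c : ℤ) :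
    ∑' j : ℕ, f (j + c) ≤ ∑' j : ℕ, f j := by
  have support_subset : f.support ⊆ Set.range ((↑) : ℕ → ℤ) := fun j hj ↦
    ⟨j.toNat, Int.toNat_of_nonneg (not_lt.1 fun hneg ↦ hj (hf j hneg))⟩
  calc ∑' j : ℕ, f (j + c) ≤ ∑' j : ℤ, f j :=
        ENNReal.tsum_comp_le_tsum_of_injective (f := fun j : ℕ ↦ (j : ℤ) + c)
          ((add_left_injective c).comp Nat.cast_injective) f
    _ = ∑' j : ℕ, f j := (Nat.cast_injective.tsum_eq support_subset).symm

theorem le_iSup_nat {f : ℤ → ℝ≥0∞} (hf : ∀ j < 0, f j = 0) (p : ℤ) : f p ≤ ⨆ m : ℕ, f m := by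
  rcases lt_or_ge p 0 with hp | hp
  · simp [hf p hp]
  · lift p to ℕ using hp
    exact le_iSup (fun m : ℕ ↦ f m) p

theorem Lp_tsum_mul_shift_le {κ : Type*} {q : ℝ} (hq : 1 ≤ q) {f : ℤ → ℝ≥0∞}
    (hf : ∀ j < 0, f j = 0) (w : κ → ℝ≥0∞) (c : κ → ℤ) :
    (∑' j : ℕ, (∑' k, w k * f (j + c k)) ^ q) ^ (1 / q) ≤
      (∑' k, w k) * (∑' j : ℕ, f j ^ q) ^ (1 / q) := by
  have hq₀ : 0 < q := by positivity
  have shift_le (k : κ) :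
      (∑' j : ℕ, f (j + c k) ^ q) ^ (1 / q) ≤ (∑' j : ℕ, f j ^ q) ^ (1 / q) := by
    refine ENNReal.rpow_le_rpow ?_ (one_div_nonneg.2 hq₀.le)
    exact tsum_nat_add_le_tsum_nat (f := fun j ↦ f j ^ q) (fun j hj ↦ by simp [hf j hj, hq₀]) (c k)
  calc (∑' j : ℕ, (∑' k, w k * f (j + c k)) ^ q) ^ (1 / q)
      ≤ ∑' k, (∑' j : ℕ, (w k * f (j + c k)) ^ q) ^ (1 / q) := Lp_tsum_le_tsum_Lp hq _
    _ = ∑' k, w k * (∑' j : ℕ, f (j + c k) ^ q) ^ (1 / q) := by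
        simp only [ENNReal.mul_rpow_of_nonneg _ _ hq₀.le, ENNReal.tsum_mul_left, one_div,
          ENNReal.mul_rpow_of_nonneg _ _ (inv_nonneg.2 hq₀.le), ENNReal.rpow_rpow_inv hq₀.ne']
    _ ≤ ∑' k, w k * (∑' j : ℕ, f j ^ q) ^ (1 / q) :=
        ENNReal.tsum_le_tsum fun k ↦ mul_le_mul_right (shift_le k) (w k)
    _ = (∑' k, w k) * (∑' j : ℕ, f j ^ q) ^ (1 / q) := ENNReal.tsum_mul_right

theorem two_rpow_add (x y : ℝ) : (2 : ℝ≥0∞) ^ (x + y) = 2 ^ x * 2 ^ y :=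
  ENNReal.rpow_add x y two_ne_zero ENNReal.ofNat_ne_top

theorem paraproduct_term_eq (r s j p l : ℝ) (x y : ℝ≥0∞) :
    (2 : ℝ≥0∞) ^ ((r - 2) * j) * 2 ^ ((3 + s) * (p + l)) * x * y =
      2 ^ (2 * l - (r - 2) * (p - j)) * (2 ^ ((1 + s) * (p + l)) * y) * (2 ^ (r * p) * x) := by
  have exponent_eq : (r - 2) * j + (3 + s) * (p + l) =
      (2 * l - (r - 2) * (p - j)) + (1 + s) * (p + l) + r * p := by ring
  rw [← two_rpow_add, exponent_eq, two_rpow_add, two_rpow_add]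
  ring

theorem tsum_two_rpow_sub_mul_ne_top {b : ℝ} (hb : 0 < b) (d : ℝ) :
    ∑' k : ℕ, (2 : ℝ≥0∞) ^ (d - b * k) ≠ ∞ := by
  have ratio_lt_one : (2 : ℝ≥0∞) ^ (-b) < 1 :=
    ENNReal.rpow_lt_one_of_one_lt_of_neg ENNReal.one_lt_two (neg_lt_zero.2 hb)
  have term_eq (k : ℕ) : (2 : ℝ≥0∞) ^ (d - b * k) = 2 ^ d * (2 ^ (-b)) ^ k := by
    rw [sub_eq_add_neg, two_rpow_add, ← neg_mul, ENNReal.rpow_mul, ENNReal.rpow_natCast]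
  simp only [term_eq, ENNReal.tsum_mul_left, ENNReal.tsum_geometric]
  exact ENNReal.mul_ne_top (by simp) (ENNReal.inv_ne_top.2 (tsub_pos_of_lt ratio_lt_one).ne')

theorem ofReal_two_rpow_mul (x y : ℝ) : ENNReal.ofReal (2 ^ x * y) = 2 ^ x * ENNReal.ofReal y := by
  rw [ENNReal.ofReal_mul (by positivity), ← ENNReal.ofReal_rpow_of_pos two_pos,
    ENNReal.ofReal_ofNat]

theorem sum_paraproduct_term_le {a : ℤ → ℝ≥0∞} (ha : ∀ j < 0, a j = 0) (r s j : ℝ) (p : ℤ)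
    (L : Finset ℤ) :
    ∑ l ∈ L, 2 ^ ((r - 2) * j) * 2 ^ ((3 + s) * (p + l)) * a p * a (p + l) ≤
      (∑ l ∈ L, 2 ^ (2 * l - (r - 2) * (p - j))) * (⨆ m : ℕ, 2 ^ ((1 + s) * m) * a m) *
        (2 ^ (r * p) * a p) := by
  simp only [Finset.sum_mul, paraproduct_term_eq]
  gcongr with l
  have high_le := le_iSup_nat (f := fun m ↦ 2 ^ ((1 + s) * m) * a m)
    (fun m hm ↦ by simp [ha m hm]) (p + l)
  exact_mod_cast high_le

theorem tsum_sum_two_rpow_ne_top {b : ℝ} (hb : 0 < b) (K : ℝ) (L : Finset ℤ) :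
    ∑' k : ℕ, ∑ l ∈ L, (2 : ℝ≥0∞) ^ (2 * l - b * (k - K)) ≠ ∞ := by
  rw [Summable.tsum_finsetSum fun _ _ ↦ ENNReal.summable]
  refine ENNReal.sum_ne_top.2 fun l _ ↦ ?_
  convert tsum_two_rpow_sub_mul_ne_top hb (2 * l + b * K) using 4
  ring

theorem lq_estimate_K2_general {r : ℝ} (hr : 2 < r) (K : ℤ) (L : Finset ℤ) :
    ∃ C : ℝ, 0 < C ∧ ∀ s q : ℝ, 1 ≤ q → ∀ a : ℤ → ℝ≥0∞, (∀ j < 0, a j = 0) →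
      (∑' j : ℕ, (∑' k : ℕ, ∑ l ∈ L, 2 ^ ((r - 2) * j) * 2 ^ ((3 + s) * (j + (k - K) + l)) *
          a (j + k - K) * a (j + k - K + l)) ^ q) ^ (1 / q) ≤
        ENNReal.ofReal C * (⨆ m : ℕ, 2 ^ ((1 + s) * m) * a m) *
          (∑' j : ℕ, (2 ^ (r * j) * a j) ^ q) ^ (1 / q) := by
  obtain ⟨C, hC⟩ := ENNReal.lt_iff_exists_nnreal_btwn.1
    (tsum_sum_two_rpow_ne_top (sub_pos.2 hr) K L).lt_top
  refine ⟨C, NNReal.coe_pos.2 (ENNReal.coe_pos.1 (pos_of_gt hC.1)), fun s q hq a ha ↦ ?_⟩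
  rw [ENNReal.ofReal_coe_nnreal]
  set S := ⨆ m : ℕ, 2 ^ ((1 + s) * m) * a m
  let w (k : ℕ) : ℝ≥0∞ := ∑ l ∈ L, 2 ^ (2 * l - (r - 2) * (k - K))
  let f (j : ℤ) : ℝ≥0∞ := 2 ^ (r * j) * a j
  have sum_le (j k : ℕ) : ∑ l ∈ L, 2 ^ ((r - 2) * j) * 2 ^ ((3 + s) * (j + (k - K) + l)) *
      a (j + k - K) * a (j + k - K + l) ≤ w k * S * f (j + (k - K)) := by
    simpa [w, f, add_sub_assoc] using sum_paraproduct_term_le ha r s j (j + (k - K)) L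
  calc _ ≤ (∑' j : ℕ, (∑' k : ℕ, w k * S * f (j + (k - K))) ^ q) ^ (1 / q) := by
        gcongr with j k
        exact sum_le j k
    _ ≤ (∑' k, w k * S) * (∑' j : ℕ, f j ^ q) ^ (1 / q) :=
        Lp_tsum_mul_shift_le hq (fun j hj ↦ by simp [f, ha j hj]) _ _
    _ = (∑' k, w k) * S * (∑' j : ℕ, f j ^ q) ^ (1 / q) := by rw [ENNReal.tsum_mul_right]
    _ ≤ C * S * (∑' j : ℕ, (2 ^ (r * j) * a j) ^ q) ^ (1 / q) :=
        mul_le_mul' (mul_le_mul' hC.1.le le_rfl) le_rfl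

/-- The key `ℓ^q` estimate (for the term `K₂`) in the proof of the a priori
Besov bound for the LANS equation: for `r > 2` and `q ∈ [1,∞)`, there is `C > 0` depending
only on `n, r, q` such that for every sequence `(a_j)_{j∈ℤ}` of nonnegative reals vanishing
for negative indices,
`(∑_{j≥0} (∑_{k≥−2} ∑_{l=−1}^{1} 2^{(r−2)j} 2^{(3+n/2)(j+k+l)} a_{j+k} a_{j+k+l})^q)^{1/q}
  ≤ C (sup_{m≥0} 2^{(1+n/2)m} a_m) (∑_{j≥0} (2^{rj} a_j)^q)^{1/q}`,
interpreted in `[0,∞]`. -/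
theorem lq_estimate_K2
    (n : ℕ) (hn : 1 ≤ n) (r : ℝ) (hr : 2 < r) (q : ℝ) (hq : 1 ≤ q) :
    ∃ C : ℝ, 0 < C ∧ ∀ a : ℤ → ℝ, (∀ j, 0 ≤ a j) → (∀ j < 0, a j = 0) →
      (∑' j : ℕ,
          (∑' k : ℕ, ∑ l ∈ Finset.Icc (-1 : ℤ) 1,
            ENNReal.ofReal ((2:ℝ) ^ ((r - 2) * (j:ℝ)) *
              (2:ℝ) ^ ((3 + (n:ℝ)/2) * ((j:ℝ) + ((k:ℝ) - 2) + (l:ℝ))) *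
              a ((j:ℤ) + (k:ℤ) - 2) * a ((j:ℤ) + (k:ℤ) - 2 + l))) ^ q) ^ (1/q)
        ≤ ENNReal.ofReal C *
          (⨆ m : ℕ, ENNReal.ofReal ((2:ℝ) ^ ((1 + (n:ℝ)/2) * (m:ℝ)) * a m)) *
          (∑' j : ℕ, ENNReal.ofReal ((2:ℝ) ^ (r * (j:ℝ)) * a j) ^ q) ^ (1/q) := by
  obtain ⟨C, hC, bound⟩ := lq_estimate_K2_general hr 2 (Finset.Icc (-1) 1)
  refine ⟨C, hC, fun a ha ha₀ ↦ ?_⟩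
  simpa only [mul_assoc, ofReal_two_rpow_mul, ENNReal.ofReal_mul (ha _), Int.cast_ofNat] using
    bound (n / 2) q hq (fun j ↦ ENNReal.ofReal (a j)) fun j hj ↦ by simp [ha₀ j hj]
end
end

section
/- Let n ≥ 1, r ∈ ℝ, and q ∈ (1,∞). There is a constant C > 0, depending only on n, r, q, such that for every sequence (a_j)_{j∈ℤ} of nonnegative reals with a_j = 0 for j < 0: ∑_{j≥0} 2^{rjq} a_j^{q−1} ∑_{k=−2}^{2} a_{j+k} ( ∑_{0 ≤ m < j+k−2} 2^{(3+n/2)m − 2j} a_m ) ≤ C · ( ∑_{m≥0} ( 2^{(1+n/2)m} a_m )^q )^{1/q} · ∑_{j≥0} ( 2^{rj} a_j )^q, the inequality being interpreted in [0,∞]. -/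
open scoped ENNReal

noncomputable section

/-!
Put `b_j = 2^{rj} a_j`. Splitting the weight `2^{rjq}` turns `2^{rjq} a_j^{q-1} a_{j+k}` into
`2^{-rk} b_j^{q-1} b_{j+k}`, while the sum over `m` is at most `sup_m 2^{(1+n/2)m} a_m`, because
`∑_{m<j} 2^{2(m-j)} ≤ 1`. The sum over `j` is then controlled by `x^{q-1} y ≤ x^q + y^q` and the
translation invariance of `ℓ^q(ℤ)`. A pair `(j, k)` with `j + k < 0` has an empty sum over `m`, so
`b` may be replaced by its restriction to nonnegative indices.
-/

lemma rpow_sub_one_mul_le_rpow_add_rpow {q : ℝ} (hq : 1 ≤ q) (x y : ℝ≥0∞) :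
    x ^ (q - 1) * y ≤ x ^ q + y ^ q := by
  have rpow_sub_one_mul_self (z : ℝ≥0∞) : z ^ (q - 1) * z = z ^ q := by
    simpa using (ENNReal.rpow_add_of_nonneg (x := z) (q - 1) 1 (by linarith) zero_le_one).symm
  have le_max_rpow : x ^ (q - 1) * y ≤ max x y ^ q := by
    rw [← rpow_sub_one_mul_self]
    exact mul_le_mul' (ENNReal.rpow_le_rpow (le_max_left x y) (by linarith)) (le_max_right x y)
  refine le_max_rpow.trans ?_
  rcases max_choice x y with h | h <;> rw [h]
  exacts [le_self_add, le_add_self]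

lemma tsum_rpow_sub_one_mul_translate_le {G : Type*} [AddGroup G] {q : ℝ} (hq : 1 ≤ q)
    (f : G → ℝ≥0∞) (k : G) :
    ∑' j, f j ^ (q - 1) * f (j + k) ≤ 2 * ∑' j, f j ^ q :=
  calc ∑' j, f j ^ (q - 1) * f (j + k)
      ≤ ∑' j, (f j ^ q + f (j + k) ^ q) :=
        ENNReal.tsum_le_tsum fun _ ↦ rpow_sub_one_mul_le_rpow_add_rpow hq _ _
    _ = ∑' j, f j ^ q + ∑' j, f j ^ q := by
        rw [ENNReal.tsum_add]
        congr 1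
        exact (Equiv.addRight k).tsum_eq fun j ↦ f j ^ q
    _ = 2 * ∑' j, f j ^ q := (two_mul _).symm

lemma tsum_rpow_sub_one_mul_sum_translates_le {G : Type*} [AddGroup G] {q : ℝ} (hq : 1 ≤ q)
    (f : G → ℝ≥0∞) (K : Finset G) (c : G → ℝ≥0∞) :
    ∑' j, f j ^ (q - 1) * ∑ k ∈ K, c k * f (j + k) ≤ 2 * (∑ k ∈ K, c k) * ∑' j, f j ^ q :=
  calc ∑' j, f j ^ (q - 1) * ∑ k ∈ K, c k * f (j + k)
      = ∑ k ∈ K, c k * ∑' j, f j ^ (q - 1) * f (j + k) := by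
        simp only [Finset.mul_sum, mul_left_comm, ← ENNReal.tsum_mul_left]
        exact Summable.tsum_finsetSum fun _ _ ↦ ENNReal.summable
    _ ≤ ∑ k ∈ K, c k * (2 * ∑' j, f j ^ q) := by
        gcongr
        exact tsum_rpow_sub_one_mul_translate_le hq f _
    _ = 2 * (∑ k ∈ K, c k) * ∑' j, f j ^ q := by rw [← Finset.sum_mul]; ring

lemma tsum_int_indicator_Ici_zero_rpow {q : ℝ} (hq : 0 < q) (f : ℤ → ℝ≥0∞) :
    ∑' j, (Set.Ici 0).indicator f j ^ q = ∑' j : ℕ, f j ^ q := by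
  have support_subset : Function.support (fun j ↦ (Set.Ici 0).indicator f j ^ q) ⊆
      Set.range ((↑) : ℕ → ℤ) := by
    intro j hj
    have indicator_ne_zero : (Set.Ici 0).indicator f j ≠ 0 := by
      intro h
      simp [h, hq] at hj
    exact ⟨j.toNat, Int.toNat_of_nonneg (Set.mem_Ici.mp (Set.mem_of_indicator_ne_zero
      indicator_ne_zero))⟩
  simp [← Nat.cast_injective.tsum_eq support_subset]

lemma sum_four_pow_mul_le_four_pow_mul_iSup (b : ℕ → ℝ≥0∞) (j : ℕ) :
    ∑ m ∈ Finset.range j, 4 ^ m * b m ≤ 4 ^ j * ⨆ m, b m :=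
  calc ∑ m ∈ Finset.range j, 4 ^ m * b m
      ≤ (∑ m ∈ Finset.range j, 4 ^ m) * ⨆ m, b m := by
        rw [Finset.sum_mul]
        gcongr
        exact le_iSup b _
    _ ≤ 4 ^ j * ⨆ m, b m := by
        gcongr
        exact_mod_cast (Nat.geomSum_lt (by norm_num) fun _ ↦ Finset.mem_range.mp).le

lemma iSup_le_tsum_rpow {ι : Type*} {q : ℝ} (hq : 0 < q) (b : ι → ℝ≥0∞) :
    ⨆ i, b i ≤ (∑' i, b i ^ q) ^ (1 / q) := by
  refine iSup_le fun i ↦ ?_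
  rw [one_div, ENNReal.le_rpow_inv_iff hq]
  exact ENNReal.le_tsum i

/-- The weighted dyadic block `2^{sj} a_j`, as an element of `[0, ∞]` (`0` where `a_j < 0`). For
`a_j = ‖Δ_j u‖_{L²}`, its `ℓ^q` norm in `j` is the Besov norm of `u` of regularity `s`. -/
def besovTerm (s : ℝ) (a : ℤ → ℝ) (j : ℤ) : ℝ≥0∞ :=
  ENNReal.ofReal ((2 : ℝ) ^ (s * j) * a j)

lemma ofReal_two_rpow_mul_eq_four_pow_mul_besovTerm (s : ℝ) (a : ℤ → ℝ) (j m : ℕ) :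
    ENNReal.ofReal ((2 : ℝ) ^ ((2 + s) * m - 2 * j) * a m) =
      (4 ^ j)⁻¹ * (4 ^ m * besovTerm s a m) := by
  have two_rpow_eq : (2 : ℝ) ^ ((2 + s) * m - 2 * j) = (4 ^ j)⁻¹ * (4 ^ m * 2 ^ (s * m)) := by
    have four_pow (i : ℕ) : (4 : ℝ) ^ i = 2 ^ (2 * i : ℝ) := by
      rw [Real.rpow_mul zero_le_two, Real.rpow_natCast]; norm_num
    rw [four_pow, four_pow, ← Real.rpow_neg zero_le_two, ← Real.rpow_add two_pos,
      ← Real.rpow_add two_pos]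
    ring_nf
  rw [two_rpow_eq, mul_assoc, mul_assoc, ENNReal.ofReal_mul (by positivity),
    ENNReal.ofReal_mul (by positivity), ENNReal.ofReal_inv_of_pos (by positivity)]
  simp [besovTerm, ENNReal.ofReal_pow]

lemma sum_low_frequencies_le_iSup_besovTerm (s : ℝ) (a : ℤ → ℝ) {M : ℤ} {j : ℕ} (hM : M ≤ j) :
    ∑ m ∈ Finset.Ico 0 M, ENNReal.ofReal ((2 : ℝ) ^ ((2 + s) * m - 2 * j) * a m) ≤
      ⨆ m : ℕ, besovTerm s a m := by
  have Ico_subset : Finset.Ico 0 M ⊆ (Finset.range j).map Nat.castEmbedding := by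
    intro m hm
    rw [Finset.mem_Ico] at hm
    exact Finset.mem_map.mpr
      ⟨m.toNat, Finset.mem_range.mpr (by omega), Int.toNat_of_nonneg hm.1⟩
  calc ∑ m ∈ Finset.Ico 0 M, ENNReal.ofReal ((2 : ℝ) ^ ((2 + s) * m - 2 * j) * a m)
      ≤ ∑ m ∈ Finset.range j, (4 ^ j)⁻¹ * (4 ^ m * besovTerm s a m) := by
        refine (Finset.sum_le_sum_of_subset Ico_subset).trans_eq ?_
        simp [← ofReal_two_rpow_mul_eq_four_pow_mul_besovTerm]
    _ ≤ (4 ^ j)⁻¹ * (4 ^ j * ⨆ m : ℕ, besovTerm s a m) := by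
        rw [← Finset.mul_sum]
        gcongr
        exact sum_four_pow_mul_le_four_pow_mul_iSup (fun m ↦ besovTerm s a m) j
    _ = ⨆ m : ℕ, besovTerm s a m :=
        ENNReal.inv_mul_cancel_left (by simp) (by simp)

lemma ofReal_mul_ofReal_translate_eq_besovTerm (r : ℝ) {q : ℝ} (hq : 1 ≤ q) {a : ℤ → ℝ}
    {j : ℤ} (haj : 0 ≤ a j) (k : ℤ) :
    ENNReal.ofReal ((2 : ℝ) ^ (r * j * q) * a j ^ (q - 1)) * ENNReal.ofReal (a (j + k)) =
      besovTerm r a j ^ (q - 1) *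
        (ENNReal.ofReal ((2 : ℝ) ^ (-(r * k))) * besovTerm r a (j + k)) := by
  have two_rpow_eq : (2 : ℝ) ^ (r * j * q) =
      2 ^ (r * j * (q - 1)) * (2 ^ (-(r * k)) * 2 ^ (r * (j + k : ℤ))) := by
    rw [← Real.rpow_add two_pos, ← Real.rpow_add two_pos]
    push_cast
    ring_nf
  have := Real.rpow_nonneg haj (q - 1)
  unfold besovTerm
  rw [ENNReal.ofReal_rpow_of_nonneg (mul_nonneg (by positivity) haj) (by linarith),
    Real.mul_rpow (by positivity) haj, ← Real.rpow_mul zero_le_two,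
    ← ENNReal.ofReal_mul (by positivity), ← ENNReal.ofReal_mul (by positivity),
    ← ENNReal.ofReal_mul (by positivity), two_rpow_eq]
  ring_nf

lemma weighted_interaction_le_iSup_besovTerm_mul (r s : ℝ) {q : ℝ} (hq : 1 ≤ q) {a : ℤ → ℝ} {j : ℕ}
    (haj : 0 ≤ a j) {k : ℤ} (hk : k ≤ 2) :
    ENNReal.ofReal ((2 : ℝ) ^ (r * j * q) * a j ^ (q - 1)) *
        (ENNReal.ofReal (a (j + k)) *
          ∑ m ∈ Finset.Ico (0 : ℤ) (j + k - 2),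
            ENNReal.ofReal ((2 : ℝ) ^ ((2 + s) * m - 2 * j) * a m)) ≤
      (⨆ m : ℕ, besovTerm s a m) *
        ((Set.Ici 0).indicator (besovTerm r a) j ^ (q - 1) *
          (ENNReal.ofReal ((2 : ℝ) ^ (-(r * k))) *
            (Set.Ici 0).indicator (besovTerm r a) (j + k))) := by
  rcases lt_or_ge (j + k : ℤ) 0 with hneg | hnonneg
  · simp [Finset.Ico_eq_empty_of_le (show (j + k - 2 : ℤ) ≤ 0 by omega)]
  · have weights_eq := ofReal_mul_ofReal_translate_eq_besovTerm r hq haj k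
    rw [Int.cast_natCast] at weights_eq
    rw [← mul_assoc, weights_eq, mul_comm, Set.indicator_of_mem (Set.mem_Ici.mpr hnonneg),
      Set.indicator_of_mem (Set.mem_Ici.mpr (Int.natCast_nonneg j))]
    gcongr
    exact sum_low_frequencies_le_iSup_besovTerm s a (by omega)

theorem lq_estimate_K1_general (r s : ℝ) {q : ℝ} (hq : 1 ≤ q) {a : ℤ → ℝ}
    (ha : ∀ j : ℕ, 0 ≤ a j) :
    ∑' j : ℕ,
        ENNReal.ofReal ((2 : ℝ) ^ (r * (j : ℝ) * q) * a j ^ (q - 1)) *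
          ∑ k ∈ Finset.Icc (-2 : ℤ) 2,
            ENNReal.ofReal (a ((j : ℤ) + k)) *
              ∑ m ∈ Finset.Ico (0 : ℤ) ((j : ℤ) + k - 2),
                ENNReal.ofReal ((2 : ℝ) ^ ((3 + s) * (m : ℝ) - 2 * (j : ℝ)) * a m)
      ≤ ENNReal.ofReal (2 * ∑ k ∈ Finset.Icc (-2 : ℤ) 2, (2 : ℝ) ^ (-(r * k))) *
        (⨆ m : ℕ, ENNReal.ofReal ((2 : ℝ) ^ ((1 + s) * (m : ℝ)) * a m)) *
        ∑' j : ℕ, ENNReal.ofReal ((2 : ℝ) ^ (r * (j : ℝ)) * a j) ^ q := by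
  have three_add : 3 + s = 2 + (1 + s) := by ring
  have ofReal_eq_besovTerm (σ : ℝ) (j : ℕ) :
      ENNReal.ofReal ((2 : ℝ) ^ (σ * j) * a j) = besovTerm σ a j := by
    simp [besovTerm]
  simp only [three_add, ofReal_eq_besovTerm]
  let N := ⨆ m : ℕ, besovTerm (1 + s) a m
  let K := Finset.Icc (-2 : ℤ) 2
  let b := (Set.Ici (0 : ℤ)).indicator (besovTerm r a)
  let c : ℤ → ℝ≥0∞ := fun k ↦ ENNReal.ofReal ((2 : ℝ) ^ (-(r * k)))
  have tsum_b_rpow : ∑' j, b j ^ q = ∑' j : ℕ, besovTerm r a j ^ q :=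
    tsum_int_indicator_Ici_zero_rpow (by linarith) _
  have constant_eq : ENNReal.ofReal (2 * ∑ k ∈ K, (2 : ℝ) ^ (-(r * k))) = 2 * ∑ k ∈ K, c k := by
    rw [ENNReal.ofReal_mul zero_le_two,
      ENNReal.ofReal_sum_of_nonneg fun _ _ ↦ by positivity, ENNReal.ofReal_ofNat]
  calc _ ≤ ∑' j : ℕ, N * (b j ^ (q - 1) * ∑ k ∈ K, c k * b (j + k)) := by
        refine ENNReal.tsum_le_tsum fun j ↦ ?_
        rw [Finset.mul_sum, Finset.mul_sum, Finset.mul_sum]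
        exact Finset.sum_le_sum fun k hk ↦
          weighted_interaction_le_iSup_besovTerm_mul r (1 + s) hq (ha j) (Finset.mem_Icc.mp hk).2
    _ ≤ N * ∑' j : ℤ, b j ^ (q - 1) * ∑ k ∈ K, c k * b (j + k) := by
        rw [ENNReal.tsum_mul_left]
        gcongr
        exact ENNReal.tsum_comp_le_tsum_of_injective Nat.cast_injective
          fun j : ℤ ↦ b j ^ (q - 1) * ∑ k ∈ K, c k * b (j + k)
    _ ≤ N * (2 * (∑ k ∈ K, c k) * ∑' j, b j ^ q) := by
        gcongr
        exact tsum_rpow_sub_one_mul_sum_translates_le hq b K c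
    _ = _ := by rw [tsum_b_rpow, constant_eq]; ring

/-- The key `ℓ^q` estimate (for the term `K₁`) in the proof of the a priori
Besov bound for the LANS equation: for `q ∈ (1,∞)`, there is `C > 0` depending only on
`n, r, q` such that for every sequence `(a_j)_{j∈ℤ}` of nonnegative reals vanishing for
negative indices,
`∑_{j≥0} 2^{rjq} a_j^{q−1} ∑_{k=−2}^{2} a_{j+k} (∑_{0≤m<j+k−2} 2^{(3+n/2)m−2j} a_m)
  ≤ C (∑_{m≥0} (2^{(1+n/2)m} a_m)^q)^{1/q} ∑_{j≥0} (2^{rj} a_j)^q`,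
interpreted in `[0,∞]`. -/
theorem lq_estimate_K1
    (n : ℕ) (hn : 1 ≤ n) (r : ℝ) (q : ℝ) (hq : 1 < q) :
    ∃ C : ℝ, 0 < C ∧ ∀ a : ℤ → ℝ, (∀ j, 0 ≤ a j) → (∀ j < 0, a j = 0) →
      (∑' j : ℕ,
          ENNReal.ofReal ((2:ℝ) ^ (r * (j:ℝ) * q) * a j ^ (q - 1)) *
            ∑ k ∈ Finset.Icc (-2 : ℤ) 2,
              ENNReal.ofReal (a ((j:ℤ) + k)) *
                ∑ m ∈ Finset.Ico (0 : ℤ) ((j:ℤ) + k - 2),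
                  ENNReal.ofReal
                    ((2:ℝ) ^ ((3 + (n:ℝ)/2) * (m:ℝ) - 2 * (j:ℝ)) * a m))
        ≤ ENNReal.ofReal C *
          (∑' m : ℕ, ENNReal.ofReal ((2:ℝ) ^ ((1 + (n:ℝ)/2) * (m:ℝ)) * a m) ^ q) ^ (1/q) *
          ∑' j : ℕ, ENNReal.ofReal ((2:ℝ) ^ (r * (j:ℝ)) * a j) ^ q := by
  refine ⟨2 * ∑ k ∈ Finset.Icc (-2 : ℤ) 2, (2 : ℝ) ^ (-(r * k)),
    mul_pos two_pos (Finset.sum_pos (fun _ _ ↦ by positivity) ⟨0, by simp⟩), fun a ha _ ↦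
    (lq_estimate_K1_general r (n / 2) hq.le fun j ↦ ha j).trans ?_⟩
  gcongr
  exact iSup_le_tsum_rpow (by linarith) _
end
end
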